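/- arXiv:2109.04099 — 2 statements merged into one kernel-verified Lean document; each statement's English description precedes it below -/
import Mathlib

section
/- Let G be a connected unicyclic graph with unique cycle C such that every vertex of C has even degree in G. Then χ'_o(G) ≤ 2 unless G = C and C is an odd cycle. -/
open SimpleGraph Finset

variable {V : Type*} [Fintype V] [DecidableEq V]

/-- Number of edges incident to `v` receiving color `i` under the edge-coloring `f`. -/
def colorCount (G : SimpleGraph V) [DecidableRel G.Adj] {k : ℕ}
    (f : Sym2 V → Fin k) (v : V) (i : Fin k) : ℕ :=
  ((G.incidenceFinset v).filter (fun e => f e = i)).card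

/-- The edge-coloring `f` is odd at the vertex `v`: every color appearing at `v`
appears an odd number of times at `v`. -/
def OddAt (G : SimpleGraph V) [DecidableRel G.Adj] {k : ℕ}
    (f : Sym2 V → Fin k) (v : V) : Prop :=
  ∀ i : Fin k, colorCount G f v i = 0 ∨ Odd (colorCount G f v i)

/-- An odd edge-coloring: odd at every vertex. -/
def IsOddColoring (G : SimpleGraph V) [DecidableRel G.Adj] {k : ℕ}
    (f : Sym2 V → Fin k) : Prop :=
  ∀ v : V, OddAt G f v

/-- The odd chromatic index: least `k` admitting an odd `k`-edge-coloring. -/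
noncomputable def oddChromIndex (G : SimpleGraph V) [DecidableRel G.Adj] : ℕ :=
  sInf {k | ∃ f : Sym2 V → Fin k, IsOddColoring G f}

/-!
Over `ZMod 2`, the range of the incidence matrix of a connected graph consists of all vectors with
zero sum, and a 2-coloring whose colors sum to `1` at a vertex of even degree is odd there. So some
2-coloring is odd on the whole cycle, provided that the cycle has even length or that a vertex off
the cycle can absorb the parity defect. Grow the vertex set of the cycle by adding adjacent vertices
one at a time: each new vertex has a single neighbor in the set, since a second one would give the
graph more edges than vertices. This lets the coloring be extended: a new vertex of odd degree gets
the color of its edge to the set on all its edges, and one of even degree has an outward edge whose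
color can be adjusted.
-/

section IncidenceMatrix

open Matrix

variable {R : Type*} (G : SimpleGraph V) [DecidableRel G.Adj]

theorem incMatrix_mulVec_single_one [NonAssocSemiring R] {a b : V} (h : G.Adj a b) :
    G.incMatrix R *ᵥ Pi.single s(a, b) 1 = Pi.single a 1 + Pi.single b 1 := by
  ext v
  have := h.ne
  by_cases hva : v = a
  · simp [incMatrix_apply', *]
  · simp [incMatrix_apply', mk'_mem_incidenceSet_iff, Pi.single_apply, *]

variable [CommSemiring R] [CharP R 2]

theorem single_add_single_mem_range_incMatrix {a b : V} (h : G.Reachable a b) :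
    Pi.single a 1 + Pi.single b 1 ∈ (G.incMatrix R).mulVecLin.range := by
  obtain ⟨p⟩ := h
  induction p with
  | nil =>
    rw [← Pi.single_add, CharTwo.add_self_eq_zero, Pi.single_zero]
    exact zero_mem _
  | @cons a c b hac _ ih =>
    have hedge : Pi.single a 1 + Pi.single c 1 ∈ (G.incMatrix R).mulVecLin.range :=
      ⟨Pi.single s(a, c) 1, incMatrix_mulVec_single_one G hac⟩
    convert! add_mem hedge ih using 1
    ext v
    simp [add_assoc, CharTwo.add_cancel_left]

theorem mem_range_incMatrix_of_sum_eq_zero (hG : G.Preconnected) {b : V → R}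
    (hb : ∑ v, b v = 0) : b ∈ (G.incMatrix R).mulVecLin.range := by
  rcases isEmpty_or_nonempty V with _ | ⟨⟨r⟩⟩
  · simp [Subsingleton.elim b 0]
  · have hdecomp : b = ∑ v, b v • (Pi.single v 1 + Pi.single r 1) := by
      ext w
      simp [Finset.sum_apply, sum_add_distrib, hb, Pi.single_apply]
    rw [hdecomp]
    exact sum_mem fun v _ =>
      Submodule.smul_mem _ _ (single_add_single_mem_range_incMatrix G (hG v r))

theorem exists_incMatrix_mulVec_eq_one_on (hG : G.Preconnected) {S : Finset V}
    (hS : Even #S ∨ S ≠ univ) : ∃ f : Sym2 V → R, ∀ v ∈ S, (G.incMatrix R *ᵥ f) v = 1 := by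
  suffices ∃ b : V → R, ∑ v, b v = 0 ∧ ∀ v ∈ S, b v = 1 by
    obtain ⟨b, hb, hbS⟩ := this
    obtain ⟨f, rfl⟩ := mem_range_incMatrix_of_sum_eq_zero G hG hb
    exact ⟨f, hbS⟩
  rcases hS with hS | hS
  · exact ⟨fun v => if v ∈ S then 1 else 0, by simp [CharTwo.natCast_eq_ite, hS],
      by simp +contextual⟩
  · obtain ⟨z, hz⟩ : ∃ z, z ∉ S := by simpa [eq_univ_iff_forall] using hS
    refine ⟨fun v => (if v ∈ S then 1 else 0) + if v = z then (#S : R) else 0, ?_, fun v hv => ?_⟩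
    · simp [sum_add_distrib, CharTwo.add_self_eq_zero]
    · simp [hv, ne_of_mem_of_not_mem hv hz]

end IncidenceMatrix

section Growth

variable {G : SimpleGraph V}

theorem preconnected_insert_induction (hG : G.Preconnected) {P : Finset V → Prop} {S : Finset V}
    (hne : S.Nonempty) (base : P S)
    (step : ∀ T u v, u ∈ T → v ∉ T → G.Adj v u → P T → P (insert v T)) : P univ := by
  by_cases hS : S = univ
  · exact hS ▸ base
  · obtain ⟨a, ha⟩ := hne
    obtain ⟨b, hb⟩ : ∃ b, b ∉ S := by simpa [eq_univ_iff_forall] using hS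
    obtain ⟨p⟩ := hG a b
    obtain ⟨d, -, hu, hv⟩ := p.exists_boundary_dart (S : Set V) (by simpa) (by simpa)
    exact preconnected_insert_induction hG (insert_nonempty d.snd S)
      (step S d.fst d.snd (by simpa using hu) (by simpa using hv) d.adj.symm base) step
termination_by #Sᶜ
decreasing_by
  exact card_lt_card (compl_ssubset_compl.2 (ssubset_insert (by simpa using hv)))

variable [DecidableRel G.Adj]

theorem card_edgeFinset_inter_sym2_insert {S : Finset V} {v : V} (hv : v ∉ S) :
    #(G.edgeFinset ∩ (insert v S).sym2) =
      #(G.edgeFinset ∩ S.sym2) + #(G.neighborFinset v ∩ S) := by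
  have hunion : G.edgeFinset ∩ (insert v S).sym2 =
      G.edgeFinset ∩ S.sym2 ∪ (G.neighborFinset v ∩ S).image (s(v, ·)) := by
    ext e
    induction e with
    | _ a b =>
    simp only [mem_inter, mem_union, mem_image, mem_edgeFinset, mem_edgeSet, mk_mem_sym2_iff,
      mem_insert, mem_neighborFinset, Sym2.eq_iff]
    grind [G.adj_comm, G.irrefl]
  have hdisj : Disjoint (G.edgeFinset ∩ S.sym2) ((G.neighborFinset v ∩ S).image (s(v, ·))) := by
    simp only [Finset.disjoint_left, mem_inter, mem_image, not_exists, not_and]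
    rintro _ ⟨-, he⟩ u - rfl
    exact hv (mk_mem_sym2_iff.1 he).1
  rw [hunion, card_union_of_disjoint hdisj,
    card_image_of_injective _ fun _ _ => Sym2.congr_right.1]

theorem card_edgeFinset_inter_sym2_add_card_le (hG : G.Preconnected) {S : Finset V}
    (hS : S.Nonempty) :
    #(G.edgeFinset ∩ S.sym2) + Fintype.card V ≤ #G.edgeFinset + #S := by
  suffices #(G.edgeFinset ∩ S.sym2) + #univ ≤ #(G.edgeFinset ∩ univ.sym2) + #S by simpa
  refine preconnected_insert_induction hG
    (P := fun T => #(G.edgeFinset ∩ S.sym2) + #T ≤ #(G.edgeFinset ∩ T.sym2) + #S) hS le_rfl ?_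
  intro T u v hu hv hvu hT
  have hpos : 0 < #(G.neighborFinset v ∩ T) := card_pos.2 ⟨u, by simp [hvu, hu]⟩
  rw [card_edgeFinset_inter_sym2_insert hv, card_insert_of_notMem hv]
  omega

theorem card_neighborFinset_inter_le_one (hG : G.Preconnected)
    (hE : #G.edgeFinset ≤ Fintype.card V) {S : Finset V} {v : V} (hv : v ∉ S)
    (hS : #S ≤ #(G.edgeFinset ∩ S.sym2)) : #(G.neighborFinset v ∩ S) ≤ 1 := by
  have hle := card_edgeFinset_inter_sym2_add_card_le hG (insert_nonempty v S)
  rw [card_edgeFinset_inter_sym2_insert hv, card_insert_of_notMem hv] at hle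
  omega

end Growth

section OddColoring

open Matrix

variable {G : SimpleGraph V} [DecidableRel G.Adj] {k : ℕ} {v : V}

theorem OddAt.congr {f g : Sym2 V → Fin k} (h : ∀ e ∈ G.incidenceFinset v, f e = g e)
    (hf : OddAt G f v) : OddAt G g v := by
  intro i
  have hcount : colorCount G g v i = colorCount G f v i :=
    congrArg card (filter_congr fun e he => by rw [h e he])
  exact hcount ▸ hf i

theorem oddAt_of_odd_degree_of_forall_eq {f : Sym2 V → Fin k} {c : Fin k} (hd : Odd (G.degree v))
    (hf : ∀ e ∈ G.incidenceFinset v, f e = c) : OddAt G f v := by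
  intro i
  by_cases hi : c = i
  · right
    rwa [colorCount, filter_true_of_mem fun e he => (hf e he).trans hi,
      card_incidenceFinset_eq_degree]
  · left
    rw [colorCount, card_eq_zero, filter_eq_empty_iff]
    exact fun e he h => hi ((hf e he).symm.trans h)

theorem sum_colorCount (f : Sym2 V → Fin k) : ∑ i, colorCount G f v i = G.degree v := by
  rw [← card_incidenceFinset_eq_degree]
  exact (card_eq_sum_card_fiberwise fun _ _ => mem_univ _).symm

-- `ZMod 2` unfolds to `Fin 2`, so a vector over `ZMod 2` indexed by pairs is itself a coloring.
theorem natCast_colorCount_one (f : Sym2 V → ZMod 2) :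
    (colorCount G (k := 2) f v 1 : ZMod 2) = (G.incMatrix (ZMod 2) *ᵥ f) v := by
  have hvalue : ∀ t : ZMod 2, (if t = 1 then 1 else 0) = t := by decide
  calc (colorCount G (k := 2) f v 1 : ZMod 2)
      = ∑ e ∈ G.incidenceFinset v, if f e = 1 then 1 else 0 := by
        rw [sum_boole]; rfl
    _ = ∑ e ∈ G.incidenceFinset v, f e := by simp only [hvalue]
    _ = (G.incMatrix (ZMod 2) *ᵥ f) v := by
        simp [mulVec, dotProduct, incMatrix_apply', incidenceFinset, ← sum_filter,
          Set.filter_mem_univ_eq_toFinset]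

theorem oddAt_of_incMatrix_mulVec_eq_one {f : Sym2 V → ZMod 2} (hd : Even (G.degree v))
    (hf : (G.incMatrix (ZMod 2) *ᵥ f) v = 1) : OddAt G (k := 2) f v := by
  have hone : Odd (colorCount G (k := 2) f v 1) := by
    rwa [← ZMod.natCast_eq_one_iff_odd, natCast_colorCount_one]
  have hzero : Odd (colorCount G (k := 2) f v 0) := by
    rw [← sum_colorCount (k := 2) f, Fin.sum_univ_two] at hd
    grind
  intro i
  right
  fin_cases i
  exacts [hzero, hone]

theorem exists_oddAt_insert_of_odd_degree {S : Finset V} {u : V} {f : Sym2 V → Fin k}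
    (hf : ∀ w ∈ S, OddAt G f w) (hd : Odd (G.degree v)) (hv : v ∉ S)
    (huniq : ∀ w ∈ S, G.Adj v w → w = u) :
    ∃ g : Sym2 V → Fin k, ∀ w ∈ insert v S, OddAt G g w := by
  refine ⟨fun e => if v ∈ e then f s(v, u) else f e, forall_mem_insert _ _ _ |>.2 ⟨?_, ?_⟩⟩
  · exact oddAt_of_odd_degree_of_forall_eq hd fun e he =>
      if_pos ((G.mem_incidenceFinset v e).1 he).2
  · intro w hw
    refine (hf w hw).congr fun e he => ?_
    obtain ⟨hadj, y, rfl⟩ := (G.mem_incidenceFinset w e).1 he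
    by_cases hve : v ∈ s(w, y)
    · obtain rfl : v = y := (Sym2.mem_iff.1 hve).resolve_left (ne_of_mem_of_not_mem hw hv).symm
      rw [if_pos hve, ← huniq w hw hadj.symm, Sym2.eq_swap]
    · rw [if_neg hve]

theorem exists_oddAt_insert_of_even_degree {S : Finset V} {z : V} {f : Sym2 V → ZMod 2}
    (hf : ∀ w ∈ S, OddAt G (k := 2) f w) (hd : Even (G.degree v)) (hv : v ∉ S) (hz : z ∉ S)
    (hvz : G.Adj v z) : ∃ g : Sym2 V → ZMod 2, ∀ w ∈ insert v S, OddAt G (k := 2) g w := by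
  let c := 1 + (G.incMatrix (ZMod 2) *ᵥ f) v
  let g : Sym2 V → ZMod 2 := f + c • Pi.single s(v, z) 1
  refine ⟨g, forall_mem_insert _ _ _ |>.2 ⟨?_, ?_⟩⟩
  · apply oddAt_of_incMatrix_mulVec_eq_one hd
    rw [mulVec_add, mulVec_smul, incMatrix_mulVec_single_one G hvz]
    simp [c, hvz.ne, add_comm (1 : ZMod 2), CharTwo.add_cancel_left]
  · intro w hw
    refine OddAt.congr (k := 2) (fun e he => ?_) (hf w hw)
    have hne : e ≠ s(v, z) := by
      rintro rfl
      rcases Sym2.mem_iff.1 ((G.mem_incidenceFinset w _).1 he).2 with rfl | rfl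
      exacts [hv hw, hz hw]
    have hge : g e = f e := by simp [g, hne]
    exact hge.symm

theorem exists_oddAt_insert {S : Finset V} {u : V} {f : Sym2 V → ZMod 2}
    (hf : ∀ w ∈ S, OddAt G (k := 2) f w) (hv : v ∉ S) (hvu : G.Adj v u)
    (huniq : ∀ w ∈ S, G.Adj v w → w = u) :
    ∃ g : Sym2 V → ZMod 2, ∀ w ∈ insert v S, OddAt G (k := 2) g w := by
  rcases Nat.even_or_odd (G.degree v) with hd | hd
  · have hpos : 0 < G.degree v := (G.degree_pos_iff_exists_adj v).2 ⟨u, hvu⟩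
    have hlt : 1 < #(G.neighborFinset v) := by
      rw [card_neighborFinset_eq_degree]
      grind
    obtain ⟨z, hz, hzu⟩ := exists_mem_ne hlt u
    rw [mem_neighborFinset] at hz
    exact exists_oddAt_insert_of_even_degree hf hd hv (fun hzS => hzu (huniq z hzS hz)) hz
  · exact exists_oddAt_insert_of_odd_degree (k := 2) hf hd hv huniq

theorem exists_isOddColoring_of_oddAt (hG : G.Preconnected)
    (hE : #G.edgeFinset ≤ Fintype.card V) {S : Finset V} (hne : S.Nonempty)
    (hS : #S ≤ #(G.edgeFinset ∩ S.sym2)) {f : Sym2 V → ZMod 2}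
    (hf : ∀ v ∈ S, OddAt G (k := 2) f v) : ∃ g : Sym2 V → Fin 2, IsOddColoring G g := by
  let P (T : Finset V) : Prop := #T ≤ #(G.edgeFinset ∩ T.sym2) ∧
    ∃ g : Sym2 V → ZMod 2, ∀ v ∈ T, OddAt G (k := 2) g v
  suffices P univ by
    obtain ⟨-, g, hg⟩ := this
    exact ⟨g, fun v => hg v (mem_univ v)⟩
  refine preconnected_insert_induction hG hne ⟨hS, f, hf⟩ ?_
  rintro T u v hu hv hvu ⟨hT, g, hg⟩
  have hle := card_neighborFinset_inter_le_one hG hE hv hT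
  have hmem : u ∈ G.neighborFinset v ∩ T := by simp [hvu, hu]
  refine ⟨?_, exists_oddAt_insert hg hv hvu fun w hw hvw =>
    card_le_one.1 hle w (by simp [hvw, hw]) u hmem⟩
  have hpos := card_pos.2 ⟨u, hmem⟩
  rw [card_edgeFinset_inter_sym2_insert hv, card_insert_of_notMem hv]
  omega

theorem exists_isOddColoring_of_even_degree (hG : G.Preconnected)
    (hE : #G.edgeFinset ≤ Fintype.card V) {S : Finset V} (hne : S.Nonempty)
    (hS : #S ≤ #(G.edgeFinset ∩ S.sym2)) (hd : ∀ v ∈ S, Even (G.degree v))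
    (hpar : Even #S ∨ S ≠ univ) : ∃ f : Sym2 V → Fin 2, IsOddColoring G f := by
  obtain ⟨f, hf⟩ := exists_incMatrix_mulVec_eq_one_on (R := ZMod 2) G hG hpar
  exact exists_isOddColoring_of_oddAt hG hE hne hS fun v hv =>
    oddAt_of_incMatrix_mulVec_eq_one (hd v hv) (hf v hv)

end OddColoring

theorem card_support_toFinset_of_isCycle {W : Type*} [DecidableEq W] {G : SimpleGraph W} {x : W}
    {C : G.Walk x x} (hC : C.IsCycle) : #C.support.toFinset = C.length := by
  have hx : x ∈ C.support.tail := C.end_mem_tail_support hC.not_nil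
  rw [← C.cons_tail_support, List.toFinset_cons, insert_eq_of_mem (List.mem_toFinset.2 hx),
    List.toFinset_card_of_nodup hC.support_nodup]
  simp

theorem edges_toFinset_subset_edgeFinset_inter_sym2 {G : SimpleGraph V} [DecidableRel G.Adj]
    {u v : V} (p : G.Walk u v) :
    p.edges.toFinset ⊆ G.edgeFinset ∩ p.support.toFinset.sym2 := by
  intro e he
  rw [List.mem_toFinset] at he
  simp only [mem_inter, mem_edgeFinset, mem_sym2_iff, List.mem_toFinset]
  exact ⟨p.edges_subset_edgeSet he, fun _ => Walk.mem_support_of_mem_edges he⟩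

theorem unicyclic_even_cycle_degrees (G : SimpleGraph V) [DecidableRel G.Adj]
    (hG : G.Connected) (hUni : G.edgeFinset.card = Fintype.card V)
    (x : V) (C : G.Walk x x) (hC : C.IsCycle)
    (hdeg : ∀ v ∈ C.support, Even (G.degree v)) :
    oddChromIndex G ≤ 2 ∨ (Odd C.length ∧ ∀ e ∈ G.edgeSet, e ∈ C.edges) := by
  have hedges : #C.edges.toFinset = C.length := by
    rw [List.toFinset_card_of_nodup hC.edges_nodup, Walk.length_edges]
  have hsub := edges_toFinset_subset_edgeFinset_inter_sym2 C
  by_cases hpar : Even #C.support.toFinset ∨ C.support.toFinset ≠ univ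
  · refine .inl (Nat.sInf_le ?_)
    refine exists_isOddColoring_of_even_degree hG.preconnected hUni.le ⟨x, by simp⟩ ?_
      (by simpa using hdeg) hpar
    rw [card_support_toFinset_of_isCycle hC, ← hedges]
    exact card_le_card hsub
  · push Not at hpar
    obtain ⟨hodd, huniv⟩ := hpar
    rw [card_support_toFinset_of_isCycle hC] at hodd
    have hall : C.edges.toFinset = G.edgeFinset := by
      apply eq_of_subset_of_card_le (hsub.trans inter_subset_left)
      rw [hUni, hedges, ← card_support_toFinset_of_isCycle hC, huniv, card_univ]
    exact .inr ⟨Nat.not_even_iff_odd.1 hodd, fun e he => by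
      simpa [← hall] using mem_edgeFinset.2 he⟩
end

section
/- Let G be a connected subdivision of an odd graph with χ'_o(G) = 4. Then no two vertices of degree 2 in G are adjacent. -/
open SimpleGraph Finset

variable {V : Type*} [Fintype V] [DecidableEq V]

/-!
Let `u` and `w` be adjacent vertices of degree two in a connected graph `G`; three colors suffice.
Toggling the edges of paths that end at `w` prescribes the degree parities of a subgraph of a
spanning tree at all vertices other than `w`. So there is a forest `F ≤ G` such that `G \ F` has
odd degree at every vertex other than `w`.

A forest has an odd edge-coloring with two colors. If some edge joins two non-leaves, remove it,
color the two sides separately, each together with that edge, and permute the colors of one side so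
that the colorings agree on it. Otherwise every component is a star and can be colored at its
center.

Giving `G \ F` a third color yields a coloring of `G` that is odd at every vertex except possibly
`w`. Recolor the edge `uw` with a color different from those of the second edges at `u` and at `w`.
-/

/-- The graph has an odd edge-coloring with (at most) `k` colors. -/
def OddEdgeColorable (G : SimpleGraph V) [DecidableRel G.Adj] (k : ℕ) : Prop :=
  ∃ f : Sym2 V → Fin k, IsOddColoring G f

lemma OddEdgeColorable.oddChromIndex_le {G : SimpleGraph V} [DecidableRel G.Adj] {k : ℕ}
    (h : OddEdgeColorable G k) : oddChromIndex G ≤ k :=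
  Nat.sInf_le h

section OddAt

variable {G H : SimpleGraph V} [DecidableRel G.Adj] [DecidableRel H.Adj] {k : ℕ}
  {f g : Sym2 V → Fin k} {v : V}

lemma OddAt.congr_s15 (hf : OddAt G f v) (hinc : G.incidenceFinset v = H.incidenceFinset v)
    (hfg : ∀ e ∈ G.incidenceFinset v, f e = g e) : OddAt H g v := by
  intro i
  have hcount : colorCount H g v i = colorCount G f v i := by
    rw [colorCount, colorCount, ← hinc]
    exact congrArg card (filter_congr fun e he ↦ by rw [hfg e he])
  exact hcount ▸ hf i

lemma OddAt.comp_injective {l : ℕ} {σ : Fin k → Fin l} (hf : OddAt G f v)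
    (hσ : Function.Injective σ) : OddAt G (σ ∘ f) v := by
  intro i
  by_cases hi : ∃ j, σ j = i
  · obtain ⟨j, rfl⟩ := hi
    simpa [colorCount, hσ.eq_iff] using hf j
  · left
    simpa [colorCount, filter_eq_empty_iff] using fun e _ he ↦ hi ⟨f e, he⟩

lemma oddAt_of_injOn (hf : Set.InjOn f (G.incidenceFinset v)) : OddAt G f v := by
  intro i
  have hle : colorCount G f v i ≤ 1 := card_le_one.mpr fun a ha b hb ↦ by
    rw [mem_filter] at ha hb
    exact hf ha.1 hb.1 (ha.2.trans hb.2.symm)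
  rcases Nat.le_one_iff_eq_zero_or_eq_one.mp hle with h | h
  · exact .inl h
  · exact .inr (h ▸ odd_one)

variable (G v) in
lemma exists_oddAt_fin_two : ∃ f : Sym2 V → Fin 2, OddAt G f v := by
  rcases Nat.even_or_odd #(G.incidenceFinset v) with heven | hodd
  · rcases (G.incidenceFinset v).eq_empty_or_nonempty with hempty | ⟨e, he⟩
    · exact ⟨0, oddAt_of_injOn (by simp [hempty])⟩
    · refine ⟨fun x ↦ if x = e then 1 else 0, Fin.forall_fin_two.mpr ⟨.inr ?_, .inr ?_⟩⟩
      · have hrest : {x ∈ G.incidenceFinset v | (if x = e then 1 else 0 : Fin 2) = 0} =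
            (G.incidenceFinset v).erase e := by
          ext x; simp [and_comm]
        rw [colorCount, hrest, card_erase_of_mem he]
        exact Nat.Even.sub_odd (card_pos.mpr ⟨e, he⟩) heven odd_one
      · have hone : {x ∈ G.incidenceFinset v | (if x = e then 1 else 0 : Fin 2) = 1} = {e} := by
          ext x; simpa using fun h ↦ h ▸ (G.mem_incidenceFinset v e).mp he
        rw [colorCount, hone, card_singleton]
        exact odd_one
  · exact ⟨0, Fin.forall_fin_two.mpr ⟨.inr (by simpa [colorCount] using hodd),
      .inl (by simp [colorCount])⟩⟩

end OddAt

section Forest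

variable {G : SimpleGraph V} [DecidableRel G.Adj] {k : ℕ}

lemma oddEdgeColorable_of_cut {f₁ f₂ : Sym2 V → Fin k} {A : Set V}
    (h₁ : ∀ v ∈ A, OddAt G f₁ v) (h₂ : ∀ v ∉ A, OddAt G f₂ v)
    (hcut : ∀ a ∈ A, ∀ b ∉ A, G.Adj a b → f₁ s(a, b) = f₂ s(a, b)) : OddEdgeColorable G k := by
  classical
  refine ⟨fun e ↦ if ∃ a ∈ e, a ∈ A then f₁ e else f₂ e, fun v ↦ ?_⟩
  by_cases hv : v ∈ A
  · refine (h₁ v hv).congr_s15 rfl fun e he ↦ ?_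
    exact (if_pos ⟨v, ((G.mem_incidenceFinset v e).mp he).2, hv⟩).symm
  · refine (h₂ v hv).congr_s15 rfl fun e he ↦ ?_
    split_ifs with hA
    · obtain ⟨a, hae, ha⟩ := hA
      obtain ⟨hG, hve⟩ := (G.mem_incidenceFinset v e).mp he
      obtain rfl : e = s(a, v) :=
        (Sym2.mem_and_mem_iff fun h : a = v ↦ hv (h ▸ ha)).mp ⟨hae, hve⟩
      exact (hcut a ha v hv hG).symm
    · rfl

lemma OddAt.of_deleteEdges_sym2 {f : Sym2 V → Fin k} {A : Set V}
    [DecidableRel (G.deleteEdges A.sym2).Adj] {v : V} (hv : v ∉ A)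
    (hf : OddAt (G.deleteEdges A.sym2) f v) : OddAt G f v := by
  refine hf.congr_s15 ?_ fun _ _ ↦ rfl
  ext e
  induction e with | h x y
  simp only [mem_incidenceFinset, mk'_mem_incidenceSet_iff, deleteEdges_adj, Set.mk_mem_sym2_iff]
  grind

lemma OddEdgeColorable.of_cut_subsingleton {A : Set V} {e : Sym2 V}
    [DecidableRel (G.deleteEdges A.sym2).Adj] [DecidableRel (G.deleteEdges Aᶜ.sym2).Adj]
    (hcut : ∀ a ∈ A, ∀ b ∉ A, G.Adj a b → s(a, b) = e)
    (hA : OddEdgeColorable (G.deleteEdges A.sym2) k)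
    (hAc : OddEdgeColorable (G.deleteEdges Aᶜ.sym2) k) : OddEdgeColorable G k := by
  obtain ⟨f₂, hf₂⟩ := hA
  obtain ⟨f₁, hf₁⟩ := hAc
  let σ := Equiv.swap (f₁ e) (f₂ e)
  refine oddEdgeColorable_of_cut (A := A) (f₁ := σ ∘ f₁)
    (fun v hv ↦ ((hf₁ v).of_deleteEdges_sym2 (by simpa)).comp_injective σ.injective)
    (fun v hv ↦ (hf₂ v).of_deleteEdges_sym2 hv) fun a ha b hb hab ↦ ?_
  rw [hcut a ha b hb hab]
  exact Equiv.swap_apply_left _ _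

lemma OddEdgeColorable.two_of_forall_adj_degree_eq_one
    (h : ∀ x y, G.Adj x y → G.degree x = 1 ∨ G.degree y = 1) : OddEdgeColorable G 2 := by
  classical
  choose f hf using exists_oddAt_fin_two G
  refine ⟨fun e ↦ if hc : ∃ c ∈ e, G.degree c ≠ 1 then f hc.choose e else 0, fun v ↦ ?_⟩
  by_cases hv : G.degree v = 1
  · rw [← card_incidenceFinset_eq_degree, card_eq_one] at hv
    obtain ⟨e, he⟩ := hv
    exact oddAt_of_injOn (by simp [he])
  · refine (hf v).congr_s15 rfl fun e he ↦ ?_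
    obtain ⟨hG, hve⟩ := (G.mem_incidenceFinset v e).mp he
    have hc : ∃ c ∈ e, G.degree c ≠ 1 := ⟨v, hve, hv⟩
    have hcv : hc.choose = v := by
      by_contra hne
      obtain ⟨hce, hc1⟩ := hc.choose_spec
      rw [(Sym2.mem_and_mem_iff hne).mp ⟨hce, hve⟩] at hG
      exact (h _ _ hG).elim hc1 hv
    rw [dif_pos hc, hcv]

lemma exists_adj_ne_of_degree_ne_one {V : Type*} {G : SimpleGraph V} {x y : V}
    [Fintype (G.neighborSet x)] (hxy : G.Adj x y) (hx : G.degree x ≠ 1) :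
    ∃ z, G.Adj x z ∧ z ≠ y := by
  by_contra! h
  exact hx (degree_eq_one_iff_existsUnique_adj.mpr ⟨y, hxy, h⟩)

end Forest

lemma deleteEdges_lt_of_adj {V : Type*} {G : SimpleGraph V} {s : Set (Sym2 V)} {x y : V}
    (hxy : G.Adj x y) (hs : s(x, y) ∈ s) : G.deleteEdges s < G :=
  (deleteEdges_le s).lt_of_ne fun h ↦
    Set.disjoint_left.mp (deleteEdges_eq_self.mp h) hxy hs

theorem OddEdgeColorable.two_of_isAcyclic {F : SimpleGraph V} [dec : DecidableRel F.Adj]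
    (hF : F.IsAcyclic) : OddEdgeColorable F 2 := by
  induction F using WellFoundedLT.induction generalizing dec with | ind F ih
  by_cases! hstar : ∀ x y, F.Adj x y → F.degree x = 1 ∨ F.degree y = 1
  · exact OddEdgeColorable.two_of_forall_adj_degree_eq_one hstar
  obtain ⟨x, y, hxy, hx, hy⟩ := hstar
  obtain ⟨z, hxz, hzy⟩ := exists_adj_ne_of_degree_ne_one hxy hx
  obtain ⟨t, hyt, htx⟩ := exists_adj_ne_of_degree_ne_one hxy.symm hy
  let A : Set V := {v | (F.deleteEdges {s(x, y)}).Reachable x v}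
  have hcut : ∀ a b, F.Adj a b → s(a, b) ≠ s(x, y) → (a ∈ A ↔ b ∈ A) := fun a b hab hne ↦
    have hadj : (F.deleteEdges {s(x, y)}).Adj a b := deleteEdges_adj.mpr ⟨hab, hne⟩
    ⟨(·.trans hadj.reachable), (·.trans hadj.symm.reachable)⟩
  have hxA : x ∈ A := Reachable.refl x
  have hyA : y ∉ A := isBridge_iff.mp (isAcyclic_iff_forall_isBridge.mp hF hxy)
  have hzA : z ∈ A := (hcut x z hxz (by simp [hzy, hxy.ne])).mp hxA
  have htA : t ∉ A := fun h ↦ hyA ((hcut y t hyt (by simp [htx, hxy.ne'])).mpr h)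
  classical
  refine OddEdgeColorable.of_cut_subsingleton (A := A) (e := s(x, y)) (fun a ha b hb hab ↦ ?_)
    (ih _ (deleteEdges_lt_of_adj hxz (Set.mk_mem_sym2_iff.mpr ⟨hxA, hzA⟩))
      (hF.anti (deleteEdges_le _)))
    (ih _ (deleteEdges_lt_of_adj hyt (Set.mk_mem_sym2_iff.mpr ⟨hyA, htA⟩))
      (hF.anti (deleteEdges_le _)))
  by_contra hne
  exact hb ((hcut a b hab hne).mp ha)

section Parity

open scoped symmDiff

omit [DecidableEq V] in
lemma natCast_degree_symmDiff (F H : SimpleGraph V) [DecidableRel F.Adj] [DecidableRel H.Adj]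
    [DecidableRel (F ∆ H).Adj] (v : V) :
    ((F ∆ H).degree v : ZMod 2) = F.degree v + H.degree v := by
  classical
  have hN : (F ∆ H).neighborFinset v =
      F.neighborFinset v \ H.neighborFinset v ∪ H.neighborFinset v \ F.neighborFinset v := by
    ext x
    simp only [mem_neighborFinset, mem_union, mem_sdiff]
    rfl
  have hcard : (F ∆ H).degree v + 2 * #(F.neighborFinset v ∩ H.neighborFinset v) =
      F.degree v + H.degree v := by
    have hF := card_sdiff_add_card_inter (F.neighborFinset v) (H.neighborFinset v)
    have hH := card_sdiff_add_card_inter (H.neighborFinset v) (F.neighborFinset v)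
    rw [inter_comm] at hH
    have hdisj : Disjoint (F.neighborFinset v \ H.neighborFinset v)
        (H.neighborFinset v \ F.neighborFinset v) := disjoint_sdiff_sdiff
    simp only [← card_neighborFinset_eq_degree, hN, card_union_of_disjoint hdisj]
    omega
  have h2 : (2 : ZMod 2) = 0 := rfl
  simpa [h2] using congrArg (Nat.cast : ℕ → ZMod 2) hcard

lemma natCast_degree_edge (a b : V) [DecidableRel (edge a b).Adj] (v : V) :
    ((edge a b).degree v : ZMod 2) = (Pi.single a 1 + Pi.single b 1 : V → ZMod 2) v := by
  have hN : (edge a b).neighborFinset v =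
      if a = b then ∅ else if v = a then {b} else if v = b then {a} else ∅ := by
    ext x
    simp only [mem_neighborFinset, edge_adj]
    grind
  rw [← card_neighborFinset_eq_degree, hN]
  simp only [Pi.add_apply, Pi.single_apply]
  split_ifs <;> simp_all [CharTwo.add_self_eq_zero]

open scoped Classical in
lemma exists_le_degree_eq_add_of_reachable {G F : SimpleGraph V} {a b : V} (hF : F ≤ G)
    (hab : G.Reachable a b) :
    ∃ F' ≤ G, ∀ v, (F'.degree v : ZMod 2) =
      F.degree v + (Pi.single a 1 + Pi.single b 1 : V → ZMod 2) v := by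
  obtain ⟨p⟩ := hab
  induction p with
  | nil => exact ⟨F, hF, fun v ↦ by simp [CharTwo.add_self_eq_zero]⟩
  | @cons a c b hac _ ih =>
    obtain ⟨F', hF', hdeg⟩ := ih
    refine ⟨F' ∆ edge a c, symmDiff_le_sup.trans (sup_le hF' ?_), fun v ↦ ?_⟩
    · exact (edge_le_iff _).mpr (.inr hac)
    · rw [natCast_degree_symmDiff, natCast_degree_edge, hdeg]
      simp only [Pi.add_apply]
      linear_combination CharTwo.add_self_eq_zero ((Pi.single c 1 : V → ZMod 2) v)

omit [DecidableEq V] in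
open scoped Classical in
theorem exists_le_degree_eq_of_connected {G : SimpleGraph V} (hG : G.Connected) (w : V)
    (t : V → ZMod 2) : ∃ F ≤ G, ∀ v ≠ w, (F.degree v : ZMod 2) = t v := by
  suffices h : ∀ S : Finset V, w ∉ S → ∃ F ≤ G, ∀ v ∈ S, (F.degree v : ZMod 2) = t v by
    simpa using h (univ.erase w) (by simp)
  intro S
  induction S using Finset.induction_on with
  | empty => exact fun _ ↦ ⟨⊥, bot_le, by simp⟩
  | insert a S ha ih =>
    intro hw
    obtain ⟨hwa, hwS⟩ : w ≠ a ∧ w ∉ S := by simpa using hw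
    obtain ⟨F, hF, hdeg⟩ := ih hwS
    by_cases hFa : (F.degree a : ZMod 2) = t a
    · exact ⟨F, hF, (forall_mem_insert ..).mpr ⟨hFa, hdeg⟩⟩
    obtain ⟨F', hF', hdeg'⟩ := exists_le_degree_eq_add_of_reachable hF (hG a w)
    refine ⟨F', hF', (forall_mem_insert ..).mpr ⟨?_, fun v hv ↦ ?_⟩⟩
    · have add_one_eq : ∀ {x y : ZMod 2}, x ≠ y → x + 1 = y := by decide
      simpa [hdeg', hwa.symm] using add_one_eq hFa
    · have hva : v ≠ a := ne_of_mem_of_not_mem hv ha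
      have hvw : v ≠ w := ne_of_mem_of_not_mem hv hwS
      simpa [hdeg', hva, hvw] using hdeg v hv

end Parity

omit [DecidableEq V] in
open scoped Classical in
lemma exists_isAcyclic_odd_degree_sdiff_of_connected {G : SimpleGraph V} (hG : G.Connected)
    (w : V) : ∃ F ≤ G, F.IsAcyclic ∧ ∀ v ≠ w, Odd ((G \ F).degree v) := by
  obtain ⟨T, hTG, hT⟩ := hG.exists_isTree_le
  obtain ⟨F, hFT, hdeg⟩ := exists_le_degree_eq_of_connected hT.connected w fun v ↦ G.degree v + 1
  have hFG : F ≤ G := hFT.trans hTG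
  refine ⟨F, hFG, hT.isAcyclic.anti hFT, fun v hv ↦ ?_⟩
  have hsdiff : ((G \ F).degree v : ZMod 2) = G.degree v + F.degree v := by
    rw [← natCast_degree_symmDiff]
    congr! 2
    exact (symmDiff_of_ge hFG).symm
  rw [← ZMod.natCast_eq_one_iff_odd, hsdiff, hdeg v hv, CharTwo.add_cancel_left]

lemma exists_oddAt_of_odd_degree_sdiff {F G : SimpleGraph V} [DecidableRel F.Adj]
    [DecidableRel G.Adj] {k : ℕ} (hFG : F ≤ G) (hF : OddEdgeColorable F k) :
    ∃ f : Sym2 V → Fin (k + 1), ∀ v, Odd ((G \ F).degree v) → OddAt G f v := by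
  obtain ⟨f, hf⟩ := hF
  let g : Sym2 V → Fin (k + 1) := fun e ↦ if e ∈ F.edgeSet then (f e).succ else 0
  refine ⟨g, fun v hv i ↦ ?_⟩
  cases i using Fin.cases with
  | zero =>
    have hzero : {e ∈ G.incidenceFinset v | g e = 0} = (G \ F).incidenceFinset v := by
      ext e
      induction e with | h x y
      simp only [g, mem_filter, mem_incidenceFinset, mk'_mem_incidenceSet_iff, sdiff_adj,
        mem_edgeSet, ite_eq_right_iff, Fin.succ_ne_zero, imp_false]
      tauto
    rw [colorCount, hzero, card_incidenceFinset_eq_degree]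
    exact .inr hv
  | succ i =>
    have hsucc : {e ∈ G.incidenceFinset v | g e = i.succ} =
        {e ∈ F.incidenceFinset v | f e = i} := by
      ext e
      induction e with | h x y
      have hadj : F.Adj x y → G.Adj x y := @hFG x y
      by_cases hF : F.Adj x y <;>
        simp [g, mk'_mem_incidenceSet_iff, hF, hadj, (Fin.succ_ne_zero i).symm]
    rw [colorCount, hsucc]
    exact hf v i

lemma exists_forall_ne_oddAt_update_of_degree_eq_two {G : SimpleGraph V} [DecidableRel G.Adj]
    {k : ℕ} (f : Sym2 V → Fin k) {v : V} {e : Sym2 V} (he : e ∈ G.incidenceSet v)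
    (hv : G.degree v = 2) : ∃ c₀, ∀ c ≠ c₀, OddAt G (Function.update f e c) v := by
  rw [← mem_incidenceFinset] at he
  obtain ⟨a, ha⟩ : ∃ a, (G.incidenceFinset v).erase e = {a} := by
    rw [← card_eq_one, card_erase_of_mem he, card_incidenceFinset_eq_degree, hv]
  have hae : a ≠ e := ne_of_mem_erase (ha ▸ mem_singleton_self a)
  refine ⟨f a, fun c hc ↦ oddAt_of_injOn ?_⟩
  rw [← insert_erase he, ha, coe_insert, coe_singleton, Set.injOn_pair]
  simp [hae, hc]

lemma OddEdgeColorable.of_adj_degree_eq_two {G : SimpleGraph V} [DecidableRel G.Adj] {k : ℕ}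
    {f : Sym2 V → Fin k} {u w : V} (hk : 2 < k) (huw : G.Adj u w) (hu : G.degree u = 2)
    (hw : G.degree w = 2) (hf : ∀ v, v ≠ u → v ≠ w → OddAt G f v) : OddEdgeColorable G k := by
  obtain ⟨c₁, hc₁⟩ := exists_forall_ne_oddAt_update_of_degree_eq_two f
    ((G.mk'_mem_incidenceSet_left_iff).mpr huw) hu
  obtain ⟨c₂, hc₂⟩ := exists_forall_ne_oddAt_update_of_degree_eq_two f
    ((G.mk'_mem_incidenceSet_right_iff).mpr huw) hw
  obtain ⟨c, -, hc⟩ : ∃ c ∈ univ, c ∉ ({c₁, c₂} : Finset (Fin k)) :=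
    exists_mem_notMem_of_card_lt_card (card_le_two.trans_lt (by simpa using hk))
  obtain ⟨hcc₁, hcc₂⟩ : c ≠ c₁ ∧ c ≠ c₂ := by simpa using hc
  refine ⟨Function.update f s(u, w) c, fun v ↦ ?_⟩
  rcases eq_or_ne v u with rfl | hvu
  · exact hc₁ c hcc₁
  rcases eq_or_ne v w with rfl | hvw
  · exact hc₂ c hcc₂
  refine (hf v hvu hvw).congr_s15 rfl fun e he ↦ (Function.update_of_ne ?_ ..).symm
  rintro rfl
  simpa [hvu, hvw] using ((G.mem_incidenceFinset v _).mp he).2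

theorem OddEdgeColorable.three_of_adj_degree_eq_two {G : SimpleGraph V} [DecidableRel G.Adj]
    {u w : V} (hG : G.Connected) (huw : G.Adj u w) (hu : G.degree u = 2) (hw : G.degree w = 2) :
    OddEdgeColorable G 3 := by
  classical
  obtain ⟨F, hFG, hF, hodd⟩ := exists_isAcyclic_odd_degree_sdiff_of_connected hG w
  obtain ⟨f, hf⟩ := exists_oddAt_of_odd_degree_sdiff hFG (two_of_isAcyclic hF)
  refine of_adj_degree_eq_two (f := f) (by norm_num) huw hu hw fun v _ hv ↦ hf v ?_
  convert hodd v hv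

theorem degree_two_vertices_nonadjacent_general (G : SimpleGraph V) [DecidableRel G.Adj]
    (hG : G.Connected) (hchi : 3 < oddChromIndex G) :
    ∀ u w : V, G.Adj u w → ¬(G.degree u = 2 ∧ G.degree w = 2) := fun _ _ huw ⟨hu, hw⟩ ↦
  hchi.not_ge (OddEdgeColorable.three_of_adj_degree_eq_two hG huw hu hw).oddChromIndex_le

theorem degree_two_vertices_nonadjacent (G : SimpleGraph V) [DecidableRel G.Adj]
    (hG : G.Connected) (hsub : ∀ v : V, Odd (G.degree v) ∨ G.degree v = 2)
    (hchi : oddChromIndex G = 4) :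
    ∀ u w : V, G.Adj u w → ¬(G.degree u = 2 ∧ G.degree w = 2) :=
  degree_two_vertices_nonadjacent_general G hG (by omega)
end
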